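/- arXiv:1810.11412 — 2 statements merged into one kernel-verified Lean document; each statement's English description precedes it below -/
import Mathlib

section
/- Let d ≥ 1 and let a_0, a_1, …, a_d be quaternions. If the function (z,w) ↦ ∑_{n=0}^{d} w^n · z · w^{d-n} · a_n vanishes identically on ℍ × ℍ, then a_n = 0 for every n = 0, …, d. (Linear independence, as functions, of the monomials of bidegree (1,d) with right quaternionic coefficients.) -/
open Polynomial ComplexConjugate

namespace Quaternion

/-- The component `x` of a quaternion `x + y * j`, with `x` and `y` complex. -/
def complexFst : Quaternion ℝ →+ ℂ where
  toFun q := ⟨q.re, q.imI⟩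
  map_zero' := rfl
  map_add' _ _ := rfl

/-- The component `y` of a quaternion `x + y * j`, with `x` and `y` complex. -/
def complexSnd : Quaternion ℝ →+ ℂ where
  toFun q := ⟨q.imJ, q.imK⟩
  map_zero' := rfl
  map_add' _ _ := rfl

theorem complexFst_apply (q : Quaternion ℝ) : complexFst q = ⟨q.re, q.imI⟩ := rfl

theorem complexSnd_apply (q : Quaternion ℝ) : complexSnd q = ⟨q.imJ, q.imK⟩ := rfl

theorem complexFst_coeComplex_mul (u : ℂ) (q : Quaternion ℝ) :
    complexFst (coeComplex u * q) = u * complexFst q := by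
  apply Complex.ext <;> simp [complexFst_apply]

theorem complexSnd_coeComplex_mul (u : ℂ) (q : Quaternion ℝ) :
    complexSnd (coeComplex u * q) = u * complexSnd q := by
  apply Complex.ext <;> simp [complexSnd_apply]

theorem eq_zero_of_complexFst_of_complexSnd {q : Quaternion ℝ}
    (h₁ : complexFst q = 0) (h₂ : complexSnd q = 0) : q = 0 := by
  exact QuaternionAlgebra.ext (congrArg Complex.re h₁) (congrArg Complex.im h₁)
    (congrArg Complex.re h₂) (congrArg Complex.im h₂)

theorem coeComplex_pow (u : ℂ) (n : ℕ) : coeComplex (u ^ n) = coeComplex u ^ n :=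
  map_pow ofComplex u n

/-- The quaternion unit `j`. -/
def unitJ : Quaternion ℝ := ⟨0, 0, 1, 0⟩

theorem unitJ_ne_zero : unitJ ≠ 0 := fun h => one_ne_zero (congrArg QuaternionAlgebra.imJ h)

theorem unitJ_mul_coeComplex (u : ℂ) : unitJ * coeComplex u = coeComplex (conj u) * unitJ := by
  have hre : unitJ.re = 0 := rfl
  have himI : unitJ.imI = 0 := rfl
  have himJ : unitJ.imJ = 1 := rfl
  have himK : unitJ.imK = 0 := rfl
  ext <;> simp [hre, himI, himJ, himK]

end Quaternion

theorem Complex.infinite_range_div_conj :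
    {u : ℂ | ∃ w : ℂ, w ≠ 0 ∧ u = w / conj w}.Infinite := by
  have hne (t : ℝ) : (⟨1, t⟩ : ℂ) ≠ 0 := fun h => one_ne_zero (congrArg Complex.re h)
  have hinj : Function.Injective fun t : ℝ => (⟨1, t⟩ : ℂ) / conj (⟨1, t⟩ : ℂ) := by
    intro s t hst
    have hc (t : ℝ) : conj (⟨1, t⟩ : ℂ) ≠ 0 := (_root_.map_ne_zero _).mpr (hne t)
    have him := congrArg Complex.im ((div_eq_div_iff (hc s) (hc t)).mp hst)
    simp at him
    linarith
  refine (Set.infinite_range_of_injective hinj).mono ?_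
  rintro _ ⟨t, rfl⟩
  exact ⟨_, hne t, rfl⟩

theorem Complex.eq_zero_of_sum_pow_mul_conj_pow (d : ℕ) (c : ℕ → ℂ)
    (h : ∀ w : ℂ, ∑ n ∈ Finset.range (d + 1), w ^ n * conj w ^ (d - n) * c n = 0) :
    ∀ n ≤ d, c n = 0 := by
  have hP : ∑ n ∈ Finset.range (d + 1), C (c n) * X ^ n = 0 := by
    refine eq_zero_of_infinite_isRoot _ (Complex.infinite_range_div_conj.mono ?_)
    rintro _ ⟨w, hw, rfl⟩
    have hc : conj w ≠ 0 := (_root_.map_ne_zero _).mpr hw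
    refine (mul_eq_zero.mp ?_).resolve_left (pow_ne_zero d hc)
    rw [eval_finsetSum, Finset.mul_sum, ← h w]
    refine Finset.sum_congr rfl fun n hn => ?_
    rw [← Nat.sub_add_cancel (Finset.mem_range_succ_iff.mp hn), pow_add]
    simp only [eval_mul, eval_C, eval_pow, eval_X, Nat.add_sub_cancel, div_pow]
    field_simp
  intro n hn
  simpa [finsetSum_coeff, coeff_C_mul, coeff_X_pow, Nat.lt_succ_iff, hn] using
    congrArg (coeff · n) hP

open Quaternion in
/-- Linear independence, as functions, of the monomials of bidegree `(1,d)`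
with right quaternionic coefficients. -/
theorem bidegree_one_d_linear_independent (d : ℕ) (hd : 1 ≤ d)
    (a : ℕ → Quaternion ℝ)
    (h : ∀ z w : Quaternion ℝ,
      ∑ n ∈ Finset.range (d + 1), w ^ n * z * w ^ (d - n) * a n = 0) :
    ∀ n ≤ d, a n = 0 := by
  have hsum (w : ℂ) : ∑ n ∈ Finset.range (d + 1),
      coeComplex (w ^ n * conj w ^ (d - n)) * (unitJ * a n) = 0 := by
    rw [← h unitJ (coeComplex w)]
    refine Finset.sum_congr rfl fun n _ => ?_
    rw [← coeComplex_pow, ← coeComplex_pow, mul_assoc (coeComplex (w ^ n)) unitJ,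
      unitJ_mul_coeComplex, map_pow, coeComplex_mul]
    simp only [mul_assoc]
  have h₁ := Complex.eq_zero_of_sum_pow_mul_conj_pow d (fun n => complexFst (unitJ * a n))
    fun w => by simpa [-coeComplex_mul, complexFst_coeComplex_mul] using congrArg complexFst (hsum w)
  have h₂ := Complex.eq_zero_of_sum_pow_mul_conj_pow d (fun n => complexSnd (unitJ * a n))
    fun w => by simpa [-coeComplex_mul, complexSnd_coeComplex_mul] using congrArg complexSnd (hsum w)
  intro n hn
  exact (mul_eq_zero.mp (eq_zero_of_complexFst_of_complexSnd (h₁ n hn) (h₂ n hn))).resolve_left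
    unitJ_ne_zero
end

section
/- For all p, q ≥ 0 with d := p + q, there exist real numbers r_0, …, r_d such that the vector field Y : ℍ² → ℍ², defined as the finite sum Y(z,w) := ∑_{n=0}^{d} ( (n/(n²+1)) • ((n•z + w)·(z - n•w)^d), (1/(n²+1)) • ((n•z + w)·(z - n•w)^d) ) · r_n (each summand being an overshear vector field in the real direction (n,1)), satisfies Div Y(z,w)[h] = h · S_{p,q}(z,w) for all z, w, h ∈ ℍ. -/
open Finset

/-- The ordered product of `z`'s and `w`'s determined by the word `α ∈ {0,1}^d`:
the `i`-th factor is `z` if `α i = true` and `w` otherwise. -/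
noncomputable def wordProd {d : ℕ} (z w : Quaternion ℝ) (α : Fin d → Bool) : Quaternion ℝ :=
  (List.ofFn fun i => if α i then z else w).prod

/-- `S d p z w`: the sum of the monomials corresponding to all words of length `d`
with exactly `p` entries equal to `1`. -/
noncomputable def S (d p : ℕ) (z w : Quaternion ℝ) : Quaternion ℝ :=
  ∑ α ∈ univ.filter (fun α : Fin d → Bool => (univ.filter fun i => α i = true).card = p),
    wordProd z w α

/-- Noncommutative binomial expansion of `(z + s w)^d` as a sum over words. -/
theorem add_smul_pow_eq_sum_wordProd (s : ℝ) (z w : Quaternion ℝ) (d : ℕ) :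
    (z + s • w) ^ d = ∑ α : Fin d → Bool,
      s ^ (d - (univ.filter fun i => α i = true).card) • wordProd z w α := by
  induction d with
  | zero => simp [wordProd]
  | succ d ih =>
    rw [← (Fin.consEquiv fun _ : Fin (d + 1) => Bool).sum_comp, Fintype.sum_prod_type,
      Fintype.sum_bool, pow_succ', ih, add_mul, Finset.mul_sum, Finset.mul_sum]
    congr 1
    · refine Finset.sum_congr rfl fun α _ => ?_
      have hcard : (univ.filter fun i => (Fin.cons true α : Fin (d + 1) → Bool) i = true).card
          = (univ.filter fun i => α i = true).card + 1 := by
        rw [Fin.card_filter_univ_succ]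
        simp
      change _ = s ^ (d + 1 - (univ.filter fun i =>
        (Fin.cons true α : Fin (d + 1) → Bool) i = true).card) • wordProd z w (Fin.cons true α)
      rw [hcard]
      simp [wordProd, List.ofFn_succ]
    · refine Finset.sum_congr rfl fun α _ => ?_
      have hcard : (univ.filter fun i => (Fin.cons false α : Fin (d + 1) → Bool) i = true).card
          = (univ.filter fun i => α i = true).card := by
        rw [Fin.card_filter_univ_succ]
        simp
      have hle : (univ.filter fun i => α i = true).card ≤ d := by
        simpa using Finset.card_filter_le (univ : Finset (Fin d)) fun i => α i = true
      change _ = s ^ (d + 1 - (univ.filter fun i =>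
        (Fin.cons false α : Fin (d + 1) → Bool) i = true).card) • wordProd z w (Fin.cons false α)
      rw [hcard, Nat.succ_sub hle, pow_succ]
      simp [wordProd, List.ofFn_succ, smul_smul]

/-- Real weights on the nodes `0, -1, …, -d` which extract the coefficient of degree `q`. -/
theorem exists_sum_mul_neg_pow_eq_ite {d q : ℕ} (hq : q ≤ d) :
    ∃ r : ℕ → ℝ, ∀ j ≤ d,
      ∑ n ∈ range (d + 1), r n * (-(n : ℝ)) ^ j = if j = q then 1 else 0 := by
  let V : Matrix (Fin (d + 1)) (Fin (d + 1)) ℝ := Matrix.vandermonde fun n => -((n : ℕ) : ℝ)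
  have hV : IsUnit V.det := by
    rw [isUnit_iff_ne_zero, Matrix.det_vandermonde_ne_zero_iff]
    intro a b hab
    simpa [Fin.ext_iff] using hab
  let e : Fin (d + 1) → ℝ := Pi.single ⟨q, Nat.lt_succ_of_le hq⟩ 1
  let x : Fin (d + 1) → ℝ := Matrix.vecMul e V⁻¹
  have hx : Matrix.vecMul x V = e := by
    simp [x, Matrix.vecMul_vecMul, Matrix.nonsing_inv_mul V hV]
  refine ⟨fun n => if hn : n < d + 1 then x ⟨n, hn⟩ else 0, fun j hj => ?_⟩
  have hxj := congrFun hx ⟨j, Nat.lt_succ_of_le hj⟩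
  rw [Finset.sum_range]
  simpa [Matrix.vecMul, dotProduct, V, e, Matrix.vandermonde_apply, Pi.single_apply, Fin.is_le] using hxj

/-- The weights extracting degree `q` turn powers of `z - n w` into `S`. -/
theorem sum_smul_sub_smul_pow_eq_S {p q : ℕ} {r : ℕ → ℝ}
    (hr : ∀ j ≤ p + q,
      ∑ n ∈ range (p + q + 1), r n * (-(n : ℝ)) ^ j = if j = q then 1 else 0)
    (z w : Quaternion ℝ) :
    ∑ n ∈ range (p + q + 1), r n • (z - (n : ℝ) • w) ^ (p + q) = S (p + q) p z w := by
  simp_rw [sub_eq_add_neg, ← neg_smul, add_smul_pow_eq_sum_wordProd, Finset.smul_sum, smul_smul]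
  rw [Finset.sum_comm, S, Finset.sum_filter]
  refine Finset.sum_congr rfl fun α _ => ?_
  have hle : (univ.filter fun i => α i = true).card ≤ p + q := by
    simpa using Finset.card_filter_le (univ : Finset (Fin (p + q))) fun i => α i = true
  rw [← Finset.sum_smul, hr _ (Nat.sub_le _ _), ite_smul, one_smul, zero_smul]
  exact if_congr (by omega) rfl rfl

/-- The divergence of an overshear field in the direction `(t, 1)`: the partial derivatives exist
and add up to `h ↦ h * c (z - t w)^d`. -/
theorem exists_hasFDerivAt_overshear (t c : ℝ) (d : ℕ) (z w : Quaternion ℝ) :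
    ∃ A B : Quaternion ℝ →L[ℝ] Quaternion ℝ,
      HasFDerivAt (fun z' => ((t / (t ^ 2 + 1)) • ((t • z' + w) * (z' - t • w) ^ d)) *
        (c : Quaternion ℝ)) A z ∧
      HasFDerivAt (fun w' => ((1 / (t ^ 2 + 1)) • ((t • z + w') * (z - t • w') ^ d)) *
        (c : Quaternion ℝ)) B w ∧
      ∀ h, A h + B h = h * (c • (z - t • w) ^ d) := by
  obtain ⟨L, hL⟩ : ∃ L : Quaternion ℝ →L[ℝ] Quaternion ℝ,
      HasFDerivAt (fun u : Quaternion ℝ => u ^ d) L (z - t • w) :=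
    ⟨_, (differentiableAt_id.pow d).hasFDerivAt⟩
  have hz := hL.comp z ((hasFDerivAt_id (𝕜 := ℝ) z).sub_const (t • w))
  have hw := hL.comp w (((hasFDerivAt_id (𝕜 := ℝ) w).const_smul t).const_sub z)
  have hz' := ((((((hasFDerivAt_id (𝕜 := ℝ) z).const_smul t).add_const w).mul' hz).const_smul
    (t / (t ^ 2 + 1))).mul_const' (c : Quaternion ℝ))
  have hw' := (((((hasFDerivAt_id (𝕜 := ℝ) w).const_add (t • z)).mul' hw).const_smul
    (1 / (t ^ 2 + 1))).mul_const' (c : Quaternion ℝ))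
  refine ⟨_, _, hz', hw', fun h => ?_⟩
  have ht : t ^ 2 + 1 ≠ 0 := by positivity
  simp [Quaternion.mul_coe_eq_smul]
  generalize (t • z + w) * L h = a
  generalize h * (z - t • w) ^ d = b
  match_scalars <;> field_simp
  ring

/-- For each `p, q` there is a finite sum of overshear vector fields in the real
directions `(n,1)`, `n = 0, …, p+q`, whose divergence is `S_{p,q}(z,w)`. -/
theorem exists_overshear_sum_div_eq_S (p q : ℕ) :
    ∃ r : ℕ → ℝ, ∀ z w h : Quaternion ℝ,
      fderiv ℝ (fun z' => ∑ n ∈ Finset.range (p + q + 1),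
          (((n : ℝ) / ((n : ℝ) ^ 2 + 1)) •
              (((n : ℝ) • z' + w) * (z' - (n : ℝ) • w) ^ (p + q))) *
            ((r n : ℝ) : Quaternion ℝ)) z h
        + fderiv ℝ (fun w' => ∑ n ∈ Finset.range (p + q + 1),
          ((1 / ((n : ℝ) ^ 2 + 1)) •
              (((n : ℝ) • z + w') * (z - (n : ℝ) • w') ^ (p + q))) *
            ((r n : ℝ) : Quaternion ℝ)) w h
        = h * S (p + q) p z w := by
  obtain ⟨r, hr⟩ := exists_sum_mul_neg_pow_eq_ite (Nat.le_add_left q p)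
  refine ⟨r, fun z w h => ?_⟩
  choose A B hA hB hAB using fun n : ℕ => exists_hasFDerivAt_overshear n (r n) (p + q) z w
  rw [(HasFDerivAt.fun_sum fun n _ => hA n).fderiv, (HasFDerivAt.fun_sum fun n _ => hB n).fderiv,
    _root_.sum_apply, _root_.sum_apply, ← Finset.sum_add_distrib,
    ← sum_smul_sub_smul_pow_eq_S hr, Finset.mul_sum]
  exact Finset.sum_congr rfl fun n _ => hAB n h
end
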